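/- Let 𝒰, 𝒴, 𝒵 be finite sets and let P_{UYZ}, Q_{UYZ} be pmfs such that Q_{UYZ}(u,y,z) = Q_{UZ}(u,z) Q_{Y|Z}(y|z) for all (u,y,z), P_{UZ} = Q_{UZ}, and D(P_{UYZ}‖Q_{UYZ}) < ∞. Then D(P_{UYZ} ‖ Q_{UYZ}) = D(P_{YZ} ‖ Q_{YZ}) + I_P(Y;U|Z). -/

import Mathlib

open scoped BigOperators

noncomputable section

open Classical in
/-- Pushforward of a finitely supported mass function along a map. -/
def pushf {Ω α : Type*} [Fintype Ω] (p : Ω → ℝ) (f : Ω → α) : α → ℝ :=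
  fun a => ∑ ω, if f ω = a then p ω else 0

/-- `p` is a probability mass function. -/
def IsPMF {α : Type*} [Fintype α] (p : α → ℝ) : Prop :=
  (∀ a, 0 ≤ p a) ∧ ∑ a, p a = 1

/-- Kullback–Leibler divergence `D(p‖q)` of mass functions, valued in `EReal`
(equal to `⊤` if `p` is not absolutely continuous w.r.t. `q`). -/
def klDiv {α : Type*} [Fintype α] (p q : α → ℝ) : EReal :=
  if ∀ a, q a = 0 → p a = 0 then ((∑ a, p a * Real.log (p a / q a) : ℝ) : EReal) else ⊤

/-- Shannon entropy. -/
def entropy {α : Type*} [Fintype α] (p : α → ℝ) : ℝ :=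
  -∑ a, p a * Real.log (p a)

/-- Conditional mutual information `I(A;B|C)` under the mass function `p`. -/
def condMI {Ω α β γ : Type*} [Fintype Ω] [Fintype α] [Fintype β] [Fintype γ]
    (p : Ω → ℝ) (A : Ω → α) (B : Ω → β) (C : Ω → γ) : ℝ :=
  entropy (pushf p (fun ω => (A ω, C ω))) + entropy (pushf p (fun ω => (B ω, C ω)))
    - entropy (pushf p (fun ω => (A ω, B ω, C ω))) - entropy (pushf p C)

/-- First marginal of a joint mass function. -/
def margFst {α β : Type*} [Fintype α] [Fintype β] (p : α × β → ℝ) : α → ℝ :=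
  fun a => ∑ b, p (a, b)

/-- Conditional mass function of the second coordinate given the first. -/
def condSnd {α β : Type*} [Fintype α] [Fintype β] (p : α × β → ℝ) : α → β → ℝ :=
  fun a b => p (a, b) / margFst p a

/-- Output distribution of a channel on an input distribution. -/
def outDist {α β : Type*} [Fintype α] [Fintype β] (ch : α → β → ℝ) (pa : α → ℝ) : β → ℝ :=
  fun b => ∑ a, pa a * ch a b

/-- The difference functional
`f(P'_X) = sup_{Q̂_X ≪ Q_X} D(P'_Y‖Q̂_Y) − D(P'_Z‖Q̂_Z)`. -/
def fdiff {X Y Z : Type*} [Fintype X] [Fintype Y] [Fintype Z]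
    (pYgX : X → Y → ℝ) (pZgX : X → Z → ℝ) (qYgX : X → Y → ℝ) (qZgX : X → Z → ℝ)
    (qX : X → ℝ) (pX' : X → ℝ) : EReal :=
  sSup {d : EReal | ∃ qhX : X → ℝ, IsPMF qhX ∧ (∀ x, qX x = 0 → qhX x = 0) ∧
    d = klDiv (outDist pYgX pX') (outDist qYgX qhX)
        - klDiv (outDist pZgX pX') (outDist qZgX qhX)}

/-- The quantity `G_{P_XY, Q_XY, P_XZ, Q_XZ}(R)`: the supremum over finite sets `𝒰`
(represented by `Fin m`) and channels `P_{U|X}` with `I_P(U;X|Y) ≤ R` and `I_P(U;X|Z) ≤ R`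
of `∑_u P_U(u) f(P_{X|U}(·|u))`. -/
def Gexp {X Y Z : Type*} [Fintype X] [Fintype Y] [Fintype Z]
    (pXY : X × Y → ℝ) (qXY : X × Y → ℝ) (pXZ : X × Z → ℝ) (qXZ : X × Z → ℝ)
    (R : ℝ) : EReal :=
  sSup {v : EReal | ∃ (m : ℕ) (ch : X → Fin m → ℝ),
    (∀ x, IsPMF (ch x)) ∧
    condMI (fun w : Fin m × X × Y => ch w.2.1 w.1 * pXY (w.2.1, w.2.2))
      (fun w => w.1) (fun w => w.2.1) (fun w => w.2.2) ≤ R ∧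
    condMI (fun w : Fin m × X × Z => ch w.2.1 w.1 * pXZ (w.2.1, w.2.2))
      (fun w => w.1) (fun w => w.2.1) (fun w => w.2.2) ≤ R ∧
    v = ∑ u : Fin m,
      ((∑ x, ch x u * margFst pXY x : ℝ) : EReal) *
        fdiff (condSnd pXY) (condSnd pXZ) (condSnd qXY) (condSnd qXZ)
          (margFst qXY)
          (fun x => ch x u * margFst pXY x / ∑ x', ch x' u * margFst pXY x')}

/-- The error exponent of distributed hypothesis testing, via the Ahlswede–Csiszár
multi-letter characterization. -/
def errExp {X W : Type*} [Fintype X] [Fintype W]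
    (pXW qXW : X × W → ℝ) (R : ℝ) : EReal :=
  sSup {v : EReal | ∃ n : ℕ, 0 < n ∧
    ∃ κ : (Fin n → X) → Fin (2 ^ ⌊(n : ℝ) * R⌋₊) → ℝ,
      (∀ x, IsPMF (κ x)) ∧
      v = (((n : ℝ)⁻¹ : ℝ) : EReal) *
        klDiv
          (fun mw : Fin (2 ^ ⌊(n : ℝ) * R⌋₊) × (Fin n → W) =>
            ∑ x : Fin n → X, (∏ i, pXW (x i, mw.2 i)) * κ x mw.1)
          (fun mw : Fin (2 ^ ⌊(n : ℝ) * R⌋₊) × (Fin n → W) =>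
            ∑ x : Fin n → X, (∏ i, qXW (x i, mw.2 i)) * κ x mw.1)}

/-!
Since `Q_{Y|Z} = Q_YZ / Q_Z` and `Q_Z = P_Z`, the factorization of `Q` reads
`Q = P_UZ * Q_YZ / P_Z`. On the support of `P` this gives
`P / Q = (P_YZ / Q_YZ) * (P_Z * P / (P_YZ * P_UZ))`, and taking the `P`-expectation of the
logarithm yields the identity. The same formula shows that `Q` and `Q_YZ` vanish together on the
support of `P`, so that the two divergences can only be infinite simultaneously.
-/

section Pushforward

variable {Ω α β : Type*} [Fintype Ω] {p q : Ω → ℝ}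

theorem sum_pushf_mul [Fintype α] (p : Ω → ℝ) (f : Ω → α) (g : α → ℝ) :
    ∑ a, pushf p f a * g a = ∑ ω, p ω * g (f ω) := by
  classical
  simp only [pushf, Finset.sum_mul, ite_mul, zero_mul]
  rw [Finset.sum_comm]
  simp only [Finset.sum_ite_eq, Finset.mem_univ, if_true]

theorem pushf_pushf [Fintype α] (p : Ω → ℝ) (f : Ω → α) (g : α → β) :
    pushf (pushf p f) g = pushf p (fun ω => g (f ω)) := by
  classical
  funext b
  simpa only [pushf, mul_ite, mul_one, mul_zero]
    using sum_pushf_mul p f (fun a => if g a = b then 1 else 0)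

theorem pushf_comp_apply_of_injective (p : Ω → ℝ) (f : Ω → α) {g : α → β}
    (hg : Function.Injective g) (a : α) : pushf p (fun ω => g (f ω)) (g a) = pushf p f a := by
  classical
  simp only [pushf, hg.eq_iff]

theorem pushf_apply_of_injective (p : Ω → ℝ) {f : Ω → α} (hf : Function.Injective f) (ω : Ω) :
    pushf p f (f ω) = p ω := by
  classical
  simp only [pushf, hf.eq_iff, Finset.sum_ite_eq', Finset.mem_univ, if_true]

theorem le_pushf_apply (hp : ∀ ω, 0 ≤ p ω) (f : Ω → α) (ω : Ω) : p ω ≤ pushf p f (f ω) := by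
  classical
  calc p ω = if f ω = f ω then p ω else 0 := (if_pos rfl).symm
    _ ≤ pushf p f (f ω) :=
      Finset.single_le_sum (f := fun ω' => if f ω' = f ω then p ω' else 0)
        (fun ω' _ => ite_nonneg (hp ω') le_rfl) (Finset.mem_univ ω)

theorem pushf_apply_pos (hp : ∀ ω, 0 ≤ p ω) (f : Ω → α) {ω : Ω} (hω : p ω ≠ 0) :
    0 < pushf p f (f ω) :=
  ((hp ω).lt_of_ne' hω).trans_le (le_pushf_apply hp f ω)

theorem margFst_eq_pushf_fst [Fintype α] [Fintype β] (p : α × β → ℝ) :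
    margFst p = pushf p Prod.fst := by
  classical
  funext a
  simp only [margFst, pushf, Fintype.sum_prod_type_right, Finset.sum_ite_eq', Finset.mem_univ,
    if_true]

theorem condSnd_pushf [Fintype α] [Fintype β] (p : Ω → ℝ) (A : Ω → α) (B : Ω → β)
    (a : α) (b : β) :
    condSnd (pushf p fun ω => (A ω, B ω)) a b
      = pushf p (fun ω => (A ω, B ω)) (a, b) / pushf p A a := by
  rw [condSnd, margFst_eq_pushf_fst, pushf_pushf]

end Pushforward

section Divergence

variable {Ω α β γ : Type*} [Fintype Ω] {p q : Ω → ℝ}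

/-- Absolute continuity `p ≪ q` of mass functions: `p` vanishes wherever `q` does. This is the
condition under which `klDiv p q` is finite. -/
def AbsCont {α : Type*} (p q : α → ℝ) : Prop :=
  ∀ a, q a = 0 → p a = 0

theorem klDiv_of_absCont (h : AbsCont p q) :
    klDiv p q = ((∑ ω, p ω * Real.log (p ω / q ω) : ℝ) : EReal) :=
  if_pos h

theorem klDiv_of_not_absCont (h : ¬AbsCont p q) : klDiv p q = ⊤ :=
  if_neg h

theorem absCont_pushf (hq : ∀ ω, 0 ≤ q ω) (h : AbsCont p q) (f : Ω → α) :
    AbsCont (pushf p f) (pushf q f) := by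
  intro a ha
  refine Finset.sum_eq_zero fun ω _ => ?_
  split_ifs with hω
  · subst hω
    by_contra hpω
    exact (pushf_apply_pos hq f fun hqω => hpω (h ω hqω)).ne' ha
  · rfl

theorem entropy_pushf [Fintype α] (p : Ω → ℝ) (f : Ω → α) :
    entropy (pushf p f) = -∑ ω, p ω * Real.log (pushf p f (f ω)) := by
  rw [entropy, sum_pushf_mul p f fun a => Real.log (pushf p f a)]

theorem condMI_eq_sum_mul_log [Fintype α] [Fintype β] [Fintype γ] (hp : ∀ ω, 0 ≤ p ω)
    (A : Ω → α) (B : Ω → β) (C : Ω → γ) :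
    condMI p A B C = ∑ ω, p ω * Real.log
      (pushf p C (C ω) * pushf p (fun ω => (A ω, B ω, C ω)) (A ω, B ω, C ω)
        / (pushf p (fun ω => (A ω, C ω)) (A ω, C ω)
          * pushf p (fun ω => (B ω, C ω)) (B ω, C ω))) := by
  simp only [condMI, entropy_pushf, sub_eq_add_neg, neg_neg, ← Finset.sum_neg_distrib,
    ← Finset.sum_add_distrib]
  refine Finset.sum_congr rfl fun ω _ => ?_
  by_cases hω : p ω = 0
  · simp only [hω, zero_mul, neg_zero, add_zero]
  have hC := (pushf_apply_pos hp C hω).ne'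
  have hAC := (pushf_apply_pos hp (fun ω => (A ω, C ω)) hω).ne'
  have hBC := (pushf_apply_pos hp (fun ω => (B ω, C ω)) hω).ne'
  have hABC := (pushf_apply_pos hp (fun ω => (A ω, B ω, C ω)) hω).ne'
  rw [Real.log_div (mul_ne_zero hC hABC) (mul_ne_zero hAC hBC), Real.log_mul hC hABC,
    Real.log_mul hAC hBC]
  ring

end Divergence

section PushforwardFactorization

variable {Ω α β γ : Type*} [Fintype Ω] {p q : Ω → ℝ} {f : Ω → α} {g : Ω → β} {h : Ω → γ}

theorem absCont_of_absCont_pushf (hp : ∀ ω, 0 ≤ p ω)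
    (hq : ∀ ω, q ω = pushf p f (f ω) * (pushf q g (g ω) / pushf p h (h ω)))
    (hpq : AbsCont (pushf p g) (pushf q g)) : AbsCont p q := by
  intro ω hqω
  by_contra hpω
  have hf := (pushf_apply_pos hp f hpω).ne'
  have hh := (pushf_apply_pos hp h hpω).ne'
  have hqg : pushf q g (g ω) ≠ 0 := fun h0 => (pushf_apply_pos hp g hpω).ne' (hpq (g ω) h0)
  exact mul_ne_zero hf (div_ne_zero hqg hh) (hq ω ▸ hqω)

theorem log_div_eq_log_pushf_div_add_log {ω : Ω} (hp : ∀ ω, 0 ≤ p ω)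
    (hq : q ω = pushf p f (f ω) * (pushf q g (g ω) / pushf p h (h ω)))
    (hpω : p ω ≠ 0) (hqω : q ω ≠ 0) :
    Real.log (p ω / q ω)
      = Real.log (pushf p g (g ω) / pushf q g (g ω))
        + Real.log (pushf p h (h ω) * p ω / (pushf p g (g ω) * pushf p f (f ω))) := by
  have hf := (pushf_apply_pos hp f hpω).ne'
  have hg := (pushf_apply_pos hp g hpω).ne'
  have hh := (pushf_apply_pos hp h hpω).ne'
  have hqg : pushf q g (g ω) ≠ 0 := fun h0 => hqω (by rw [hq, h0, zero_div, mul_zero])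
  rw [← Real.log_mul (div_ne_zero hg hqg) (div_ne_zero (mul_ne_zero hh hpω) (mul_ne_zero hg hf)),
    hq]
  congr 1
  field_simp

theorem klDiv_eq_klDiv_pushf_add_sum_mul_log [Fintype β] (hp : ∀ ω, 0 ≤ p ω)
    (hq : ∀ ω, 0 ≤ q ω)
    (hq_eq : ∀ ω, q ω = pushf p f (f ω) * (pushf q g (g ω) / pushf p h (h ω))) :
    klDiv p q = klDiv (pushf p g) (pushf q g)
      + ((∑ ω, p ω * Real.log
          (pushf p h (h ω) * p ω / (pushf p g (g ω) * pushf p f (f ω))) : ℝ) : EReal) := by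
  by_cases hpq : AbsCont p q
  · rw [klDiv_of_absCont hpq, klDiv_of_absCont (absCont_pushf hq hpq g), ← EReal.coe_add,
      sum_pushf_mul p g fun b => Real.log (pushf p g b / pushf q g b), ← Finset.sum_add_distrib]
    refine congrArg _ (Finset.sum_congr rfl fun ω _ => ?_)
    by_cases hpω : p ω = 0
    · simp only [hpω, zero_mul, add_zero]
    · rw [log_div_eq_log_pushf_div_add_log hp (hq_eq ω) hpω fun hqω => hpω (hpq ω hqω), mul_add]
  · rw [klDiv_of_not_absCont hpq,
      klDiv_of_not_absCont fun hpq' => hpq (absCont_of_absCont_pushf hp hq_eq hpq'),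
      EReal.top_add_coe]

end PushforwardFactorization

section MarkovFactorization

variable {U Y Z : Type*} [Fintype U] [Fintype Y] [Fintype Z] {P Q : U × Y × Z → ℝ}

theorem condMI_snd_fst_eq_sum_mul_log (hP : ∀ w, 0 ≤ P w) :
    condMI P (fun w => w.2.1) (fun w => w.1) (fun w => w.2.2) = ∑ w, P w * Real.log
      (pushf P (fun w => w.2.2) w.2.2 * P w
        / (pushf P (fun w => w.2) w.2 * pushf P (fun w => (w.1, w.2.2)) (w.1, w.2.2))) := by
  have reorder_injective : Function.Injective fun w : U × Y × Z => (w.2.1, w.1, w.2.2) := by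
    rintro ⟨u, y, z⟩ ⟨u', y', z'⟩ h
    simp only [Prod.mk.injEq] at h ⊢
    tauto
  rw [condMI_eq_sum_mul_log hP]
  exact Finset.sum_congr rfl fun w _ => by rw [pushf_apply_of_injective P reorder_injective w]

theorem apply_eq_pushf_mul_pushf_div
    (hQfact : ∀ u y z, Q (u, y, z)
      = pushf Q (fun w => (w.1, w.2.2)) (u, z) *
          condSnd (pushf Q (fun w => (w.2.2, w.2.1))) z y)
    (hPQUZ : pushf P (fun w => (w.1, w.2.2)) = pushf Q (fun w => (w.1, w.2.2)))
    (w : U × Y × Z) :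
    Q w = pushf P (fun w => (w.1, w.2.2)) (w.1, w.2.2)
      * (pushf Q (fun w => w.2) w.2 / pushf P (fun w => w.2.2) w.2.2) := by
  have hPQZ : pushf P (fun w => w.2.2) = pushf Q (fun w => w.2.2) := by
    simpa only [pushf_pushf] using congrArg (pushf · Prod.snd) hPQUZ
  have hQYZ : pushf Q (fun w => (w.2.2, w.2.1)) (w.2.2, w.2.1) = pushf Q (fun w => w.2) w.2 :=
    pushf_comp_apply_of_injective Q (fun w => w.2) Prod.swap_injective w.2
  rw [hPQUZ, hPQZ, ← hQYZ, ← condSnd_pushf]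
  exact hQfact w.1 w.2.1 w.2.2

theorem klDiv_eq_klDiv_add_condMI_general (hP : ∀ w, 0 ≤ P w) (hQ : ∀ w, 0 ≤ Q w)
    (hQfact : ∀ u y z, Q (u, y, z)
      = pushf Q (fun w => (w.1, w.2.2)) (u, z) *
          condSnd (pushf Q (fun w => (w.2.2, w.2.1))) z y)
    (hPQUZ : pushf P (fun w => (w.1, w.2.2)) = pushf Q (fun w => (w.1, w.2.2))) :
    klDiv P Q
      = klDiv (pushf P (fun w => w.2)) (pushf Q (fun w => w.2))
        + ((condMI P (fun w => w.2.1) (fun w => w.1) (fun w => w.2.2) : ℝ) : EReal) := by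
  rw [condMI_snd_fst_eq_sum_mul_log hP]
  exact klDiv_eq_klDiv_pushf_add_sum_mul_log hP hQ (apply_eq_pushf_mul_pushf_div hQfact hPQUZ)

end MarkovFactorization

/-- If `Q_{UYZ} = Q_{UZ} Q_{Y|Z}`, `P_UZ = Q_UZ` and `D(P_UYZ‖Q_UYZ) < ∞`, then
`D(P_UYZ ‖ Q_UYZ) = D(P_YZ ‖ Q_YZ) + I_P(Y;U|Z)`. -/
theorem klDiv_eq_klDiv_add_condMI {U Y Z : Type*} [Fintype U] [Fintype Y] [Fintype Z]
    (P Q : U × Y × Z → ℝ) (hP : IsPMF P) (hQ : IsPMF Q)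
    (hQfact : ∀ u y z, Q (u, y, z)
      = pushf Q (fun w => (w.1, w.2.2)) (u, z) *
          condSnd (pushf Q (fun w => (w.2.2, w.2.1))) z y)
    (hPQUZ : pushf P (fun w => (w.1, w.2.2)) = pushf Q (fun w => (w.1, w.2.2)))
    (hfin : klDiv P Q < ⊤) :
    klDiv P Q
      = klDiv (pushf P (fun w => w.2)) (pushf Q (fun w => w.2))
        + ((condMI P (fun w => w.2.1) (fun w => w.1) (fun w => w.2.2) : ℝ) : EReal) :=
  klDiv_eq_klDiv_add_condMI_general hP.1 hQ.1 hQfact hPQUZ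

end
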